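/- Let h be a positive integer and r = 2h. Let μ be a centered Gaussian probability measure on the finite-dimensional real normed space Matrix (Fin r) (Fin r) ℝ (i.e., the pushforward of μ under every continuous linear functional is a Gaussian measure on ℝ, and ∫ S dμ(S) = 0). Set K(α,i,β,j) := ∫ (S α i)·(S β j) dμ(S). Let Λ := ExteriorAlgebra ℝ (Fin r → ℝ), with e_α the image of the α-th standard basis vector and etop := e_0 * e_1 * ⋯ * e_{r−1}, and equip Λ ⊗[ℝ] Λ with the tensor-product algebra structure in which (a ⊗ b)·(c ⊗ d) = (a·c) ⊗ (b·d). Define Ξ := Σ_{α < β, i < j} ( K(α,i,β,j) − K(α,j,β,i) ) • ((e_α * e_β) ⊗ (e_i * e_j)) ∈ Λ ⊗ Λ. Then the expected determinant satisfies ( h! · ∫ det S dμ(S) ) • (etop ⊗ etop) = Ξ^h. -/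

import Mathlib

open MeasureTheory ProbabilityTheory
open scoped TensorProduct Matrix

attribute [local instance] Matrix.normedAddCommGroup Matrix.normedSpace

/-- Measurable space structure on real matrices, coming from the product structure on
`Fin n → Fin m → ℝ` (of which `Matrix (Fin n) (Fin m) ℝ` is a copy). -/
instance matrixMeasurableSpace (n m : ℕ) :
    MeasurableSpace (Matrix (Fin n) (Fin m) ℝ) :=
  inferInstanceAs (MeasurableSpace (Fin n → Fin m → ℝ))

/-
Encode a matrix `S` as the double form `ω = ∑ α, e_α ⊗ (row α of S)`. The summands commute and
square to zero, so `ω ^ r = r! • ∏ α, e_α ⊗ (row α) = (r! * det S) • (etop ⊗ etop)`, while `ω ^ 2`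
is twice the double form of the `2 × 2` minors of `S`, whose expectation is `Ξ`. Since `ω` is linear
in `S` and takes commuting values, the Gaussian moment formula
`E X ^ (2 h) = (2 h - 1)‼ (E X ^ 2) ^ h` holds for `X = ω`: after factoring `ω` through a polynomial
ring, both sides may be evaluated at a point, where the formula is the classical one for a real
Gaussian variable. Comparing the two gives
`((2 h)! E det S) • (etop ⊗ etop) = ((2 h - 1)‼ 2 ^ h) • Ξ ^ h`, and `(2 h)! = (2 h - 1)‼ 2 ^ h h!`.
-/

namespace stochasticGBC

section WeakIntegral

variable {Ω A B : Type*} [MeasurableSpace Ω] {μ : Measure Ω}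
  [AddCommGroup A] [Module ℝ A] [AddCommGroup B] [Module ℝ B]

/-- `a` is the weak (Pettis) integral of `Y`. Testing against all linear functionals allows taking
expectations in a real vector space that carries no topology, such as an exterior algebra. -/
def HasWeakIntegral (μ : Measure Ω) (Y : Ω → A) (a : A) : Prop :=
  ∀ ℓ : Module.Dual ℝ A, Integrable (fun ω => ℓ (Y ω)) μ ∧ ∫ ω, ℓ (Y ω) ∂μ = ℓ a

theorem hasWeakIntegral_smul_const {f : Ω → ℝ} (hf : Integrable f μ) (a : A) :
    HasWeakIntegral μ (fun ω => f ω • a) ((∫ ω, f ω ∂μ) • a) := fun ℓ => by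
  simp only [map_smul, smul_eq_mul]
  exact ⟨hf.mul_const _, integral_mul_const _ _⟩

namespace HasWeakIntegral

theorem unique {Y : Ω → A} {a b : A} (ha : HasWeakIntegral μ Y a) (hb : HasWeakIntegral μ Y b) :
    a = b :=
  Module.eval_apply_injective ℝ <| LinearMap.ext fun ℓ => (ha ℓ).2.symm.trans (hb ℓ).2

theorem map {Y : Ω → A} {a : A} (hY : HasWeakIntegral μ Y a) (T : A →ₗ[ℝ] B) :
    HasWeakIntegral μ (fun ω => T (Y ω)) (T a) :=
  fun ℓ => hY (ℓ ∘ₗ T)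

theorem sum {ι : Type*} {s : Finset ι} {Y : ι → Ω → A} {a : ι → A}
    (hY : ∀ i ∈ s, HasWeakIntegral μ (Y i) (a i)) :
    HasWeakIntegral μ (fun ω => ∑ i ∈ s, Y i ω) (∑ i ∈ s, a i) := fun ℓ => by
  simp only [map_sum]
  exact ⟨integrable_finsetSum _ fun i hi => (hY i hi ℓ).1,
    (integral_finsetSum _ fun i hi => (hY i hi ℓ).1).trans
      (Finset.sum_congr rfl fun i hi => (hY i hi ℓ).2)⟩

theorem eq_integral_smul {f : Ω → ℝ} {a b : A} (hf : HasWeakIntegral μ (fun ω => f ω • a) b) :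
    b = (∫ ω, f ω ∂μ) • a :=
  Module.eval_apply_injective ℝ <| LinearMap.ext fun ℓ => by
    simpa [integral_mul_const] using (hf ℓ).2.symm

end HasWeakIntegral

end WeakIntegral

section Moments

theorem integral_even_pow_mul_exp_neg_sq_div_two (h : ℕ) :
    ∫ x : ℝ, x ^ (2 * h) * Real.exp (-x ^ 2 / 2)
      = √(2 * Real.pi) * ((2 * h - 1).doubleFactorial : ℝ) := by
  have half_line : ∫ x in Set.Ioi (0 : ℝ), x ^ (2 * h) * Real.exp (-x ^ 2 / 2)
      = 2⁻¹ ^ (-(h + 1 / 2 : ℝ)) * 2⁻¹ * Real.Gamma (h + 1 / 2) := by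
    have gamma_integral := integral_rpow_mul_exp_neg_mul_rpow (p := 2) (q := (2 * h : ℕ))
      (b := 2⁻¹) two_pos (by linarith [(2 * h).cast_nonneg (α := ℝ)]) (by norm_num)
    simp only [Real.rpow_natCast, Real.rpow_ofNat, one_div] at gamma_integral
    convert gamma_integral using 3 <;> push_cast <;> ring_nf
  have two_sided := integral_comp_abs (f := fun x : ℝ => x ^ (2 * h) * Real.exp (-x ^ 2 / 2))
  simp only [(even_two_mul h).pow_abs, sq_abs] at two_sided
  have power_of_two : (2⁻¹ : ℝ) ^ (-(h + 1 / 2 : ℝ)) = 2 ^ h * √2 := by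
    rw [Real.rpow_neg (by norm_num), Real.inv_rpow two_pos.le, inv_inv, Real.rpow_add two_pos,
      Real.rpow_natCast, Real.sqrt_eq_rpow]
  rw [two_sided, half_line, power_of_two, Real.Gamma_nat_add_half, Real.sqrt_mul two_pos.le]
  field_simp

theorem integral_even_pow_gaussianReal_zero_one (h : ℕ) :
    ∫ x, x ^ (2 * h) ∂gaussianReal 0 1 = ((2 * h - 1).doubleFactorial : ℝ) := by
  have density (x : ℝ) : gaussianPDFReal 0 1 x • x ^ (2 * h)
      = (√(2 * Real.pi))⁻¹ * (x ^ (2 * h) * Real.exp (-x ^ 2 / 2)) := by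
    simp only [gaussianPDFReal, NNReal.coe_one, mul_one, sub_zero, smul_eq_mul]
    ring
  rw [integral_gaussianReal_eq_integral_smul one_ne_zero]
  simp only [density, integral_const_mul, integral_even_pow_mul_exp_neg_sq_div_two]
  exact inv_mul_cancel_left₀ (by positivity) _

theorem integral_even_pow_gaussianReal_zero (h : ℕ) (v : NNReal) :
    ∫ x, x ^ (2 * h) ∂gaussianReal 0 v = ((2 * h - 1).doubleFactorial : ℝ) * v ^ h := by
  have map_sqrt_mul : (gaussianReal 0 1).map (fun x => √v * x) = gaussianReal 0 v := by
    rw [gaussianReal_map_const_mul]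
    congr 1
    · simp
    · ext; simp
  have sqrt_pow : √v ^ (2 * h) = (v : ℝ) ^ h := by rw [pow_mul, Real.sq_sqrt v.coe_nonneg]
  rw [← map_sqrt_mul, integral_map (by fun_prop) (by fun_prop)]
  simp only [mul_pow, sqrt_pow, integral_const_mul, integral_even_pow_gaussianReal_zero_one]
  exact mul_comm _ _

variable {E : Type*} [NormedAddCommGroup E] [NormedSpace ℝ E] [MeasurableSpace E] [BorelSpace E]
  {μ : Measure E} [IsGaussian μ]

theorem integral_dual_even_pow (L : StrongDual ℝ E) (hL : ∫ x, L x ∂μ = 0) (h : ℕ) :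
    ∫ x, L x ^ (2 * h) ∂μ = ((2 * h - 1).doubleFactorial : ℝ) * (∫ x, L x ^ 2 ∂μ) ^ h := by
  obtain ⟨v, hv⟩ : ∃ v, μ.map L = gaussianReal 0 v :=
    ⟨_, by rw [IsGaussian.map_eq_gaussianReal L, hL]⟩
  have moment (n : ℕ) : ∫ x, L x ^ n ∂μ = ∫ x, x ^ n ∂gaussianReal 0 v := by
    rw [← hv, integral_map (by fun_prop) (by fun_prop)]
  have variance_eq : ∫ x, L x ^ 2 ∂μ = v := by
    simpa [moment] using integral_even_pow_gaussianReal_zero 1 v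
  rw [variance_eq, moment, integral_even_pow_gaussianReal_zero]

theorem integrable_prod_dual {ι : Type*} [Fintype ι] (L : ι → StrongDual ℝ E) :
    Integrable (fun x => ∏ i, L i x) μ := by
  have holder := MemLp.prod' (s := Finset.univ) (p := fun _ => (Fintype.card ι : ENNReal))
    fun i _ => IsGaussian.memLp_dual μ (L i) _ (ENNReal.natCast_ne_top _)
  exact holder.integrable <| by simp

theorem integrable_prod_linearMap [FiniteDimensional ℝ E] {ι : Type*} [Fintype ι]
    (L : ι → E →ₗ[ℝ] ℝ) : Integrable (fun x => ∏ i, L i x) μ :=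
  integrable_prod_dual fun i => (L i).toContinuousLinearMap

end Moments

theorem exists_mvPolynomial_algHom_of_commute {R A ι : Type*} [CommRing R] [Ring A] [Algebra R A]
    {x : ι → A} (hx : ∀ k l, Commute (x k) (x l)) :
    ∃ φ : MvPolynomial ι R →ₐ[R] A, ∀ k, φ (MvPolynomial.X k) = x k := by
  have : IsMulCommutative (Algebra.adjoin R (Set.range x)) :=
    Algebra.isMulCommutative_adjoin R (by rintro _ ⟨k, rfl⟩ _ ⟨l, rfl⟩; exact hx k l)
  open scoped IsMulCommutative in
  exact ⟨(Algebra.adjoin R (Set.range x)).val.comp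
    (MvPolynomial.aeval fun k => ⟨x k, Algebra.subset_adjoin ⟨k, rfl⟩⟩), fun k => by simp⟩

section Wick

variable {E : Type*} [NormedAddCommGroup E] [NormedSpace ℝ E] [MeasurableSpace E] [BorelSpace E]
  [FiniteDimensional ℝ E] {μ : Measure E} [IsGaussian μ]

theorem exists_hasWeakIntegral_pow {A : Type*} [CommRing A] [Algebra ℝ A] (T : E →ₗ[ℝ] A) (n : ℕ) :
    ∃ a, HasWeakIntegral μ (fun x => T x ^ n) a := by
  let b := Module.finBasis ℝ E
  have expand (x : E) :
      T x ^ n = ∑ p : Fin n → _, (∏ i, b.coord (p i) x) • ∏ i, T (b (p i)) := by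
    conv_lhs => rw [← b.sum_repr x, map_sum, Fintype.sum_pow]
    simp [Finset.prod_smul]
  simp only [expand]
  exact ⟨_, .sum fun p _ => hasWeakIntegral_smul_const (integrable_prod_linearMap _) _⟩

theorem hasWeakIntegral_mvPolynomial_even_pow (hμ : ∫ x, x ∂μ = 0) {ι : Type*}
    (T : E →ₗ[ℝ] MvPolynomial ι ℝ) {C : MvPolynomial ι ℝ}
    (hC : HasWeakIntegral μ (fun x => T x ^ 2) C) (h : ℕ) :
    HasWeakIntegral μ (fun x => T x ^ (2 * h)) (((2 * h - 1).doubleFactorial : ℝ) • C ^ h) := by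
  obtain ⟨Q, hQ⟩ := exists_hasWeakIntegral_pow (μ := μ) T (2 * h)
  suffices Q = ((2 * h - 1).doubleFactorial : ℝ) • C ^ h from this ▸ hQ
  refine MvPolynomial.funext fun t => ?_
  let evalₜ : MvPolynomial ι ℝ →ₗ[ℝ] ℝ := (MvPolynomial.aeval t).toLinearMap
  let L : StrongDual ℝ E := (evalₜ ∘ₗ T).toContinuousLinearMap
  have hL : ∫ x, L x ∂μ = 0 := by rw [IsGaussian.integral_dual, hμ, map_zero]
  have moment {n : ℕ} {P : MvPolynomial ι ℝ} (hP : HasWeakIntegral μ (fun x => T x ^ n) P) :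
      ∫ x, L x ^ n ∂μ = MvPolynomial.eval t P := by
    simpa [L, evalₜ, MvPolynomial.aeval_eq_eval] using (hP evalₜ).2
  rw [MvPolynomial.smul_eval, map_pow, ← moment hQ, ← moment hC, integral_dual_even_pow L hL]

theorem hasWeakIntegral_even_pow (hμ : ∫ x, x ∂μ = 0) {A : Type*} [Ring A] [Algebra ℝ A]
    {T : E →ₗ[ℝ] A} (hT : ∀ x y, Commute (T x) (T y)) {C : A}
    (hC : HasWeakIntegral μ (fun x => T x ^ 2) C) (h : ℕ) :
    HasWeakIntegral μ (fun x => T x ^ (2 * h)) (((2 * h - 1).doubleFactorial : ℝ) • C ^ h) := by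
  let b := Module.finBasis ℝ E
  obtain ⟨φ, hφ⟩ := exists_mvPolynomial_algHom_of_commute (R := ℝ) fun k l => hT (b k) (b l)
  let T' := b.constr ℝ (MvPolynomial.X (R := ℝ))
  have factor (x : E) : φ (T' x) = T x :=
    LinearMap.congr_fun (b.ext fun k => by simp [T', hφ] : φ.toLinearMap ∘ₗ T' = T) x
  obtain ⟨Q, hQ⟩ := exists_hasWeakIntegral_pow (μ := μ) T' 2
  have map_φ {n : ℕ} {P} (hP : HasWeakIntegral μ (fun x => T' x ^ n) P) :
      HasWeakIntegral μ (fun x => T x ^ n) (φ P) := by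
    simpa [factor] using hP.map φ.toLinearMap
  have hφQ : φ Q = C := (map_φ hQ).unique hC
  simpa [hφQ] using map_φ (hasWeakIntegral_mvPolynomial_even_pow hμ T' hQ h)

end Wick

theorem sum_sum_eq_sum_sum_lt {ι M : Type*} [Fintype ι] [LinearOrder ι] [AddCommMonoid M]
    (g : ι → ι → M) (hg : ∀ a, g a a = 0) :
    ∑ a, ∑ b, g a b = ∑ a, ∑ b, if a < b then g a b + g b a else 0 := by
  have split_lt_gt (a b : ι) :
      g a b = (if a < b then g a b else 0) + (if b < a then g a b else 0) := by
    rcases lt_trichotomy a b with h | rfl | h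
    · simp [h, h.not_gt]
    · simp [hg]
    · simp [h, h.not_gt]
  calc
    ∑ a, ∑ b, g a b
      = (∑ a, ∑ b, if a < b then g a b else 0) + ∑ a, ∑ b, if b < a then g a b else 0 := by
        simp only [← Finset.sum_add_distrib, ← split_lt_gt]
    _ = (∑ a, ∑ b, if a < b then g a b else 0) + ∑ a, ∑ b, if a < b then g b a else 0 := by
        rw [Finset.sum_comm (f := fun a b => if b < a then g a b else 0)]
    _ = ∑ a, ∑ b, if a < b then g a b + g b a else 0 := by
        simp only [← Finset.sum_add_distrib, ← ite_add_zero]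

section SquareZero

variable {A : Type*} [Semiring A]

theorem add_pow_succ_of_mul_self_eq_zero {x y : A} (hxy : Commute x y) (hx : x * x = 0) (n : ℕ) :
    (x + y) ^ (n + 1) = y ^ (n + 1) + (n + 1) • (x * y ^ n) := by
  induction n with
  | zero => simp [add_comm]
  | succ n ih =>
    have hx_ann : x * (x * y ^ n) = 0 := by rw [← mul_assoc, hx, zero_mul]
    have hy_move : y * (x * y ^ n) = x * y ^ (n + 1) := by
      rw [← mul_assoc, ← hxy.eq, mul_assoc, ← pow_succ']
    rw [pow_succ', ih, add_mul, mul_add, mul_add, mul_smul_comm, mul_smul_comm, hx_ann, hy_move,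
      ← pow_succ', smul_zero, add_zero, succ_nsmul (x * y ^ (n + 1)) (n + 1)]
    abel

theorem sum_pow_succ_eq_zero {n : ℕ} {x : Fin n → A} (hx : ∀ i j, Commute (x i) (x j))
    (hsq : ∀ i, x i * x i = 0) : (∑ i, x i) ^ (n + 1) = 0 := by
  induction n with
  | zero => simp
  | succ n ih =>
    have hcomm : Commute (x 0) (∑ i : Fin n, x i.succ) := .sum_right _ _ _ fun i _ => hx 0 i.succ
    have htail := ih (x := fun i => x i.succ) (fun i j => hx _ _) fun i => hsq _
    rw [Fin.sum_univ_succ, add_pow_succ_of_mul_self_eq_zero hcomm (hsq 0), pow_succ, htail]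
    simp

theorem sum_pow_eq_factorial_smul_prod {n : ℕ} {x : Fin n → A}
    (hx : ∀ i j, Commute (x i) (x j)) (hsq : ∀ i, x i * x i = 0) :
    (∑ i, x i) ^ n = n.factorial • (List.ofFn x).prod := by
  induction n with
  | zero => simp
  | succ n ih =>
    have hcomm : Commute (x 0) (∑ i : Fin n, x i.succ) := .sum_right _ _ _ fun i _ => hx 0 i.succ
    rw [Fin.sum_univ_succ, add_pow_succ_of_mul_self_eq_zero hcomm (hsq 0),
      sum_pow_succ_eq_zero (fun i j => hx _ _) fun i => hsq _,
      ih (fun i j => hx _ _) fun i => hsq _, List.ofFn_succ, List.prod_cons, zero_add,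
      mul_smul_comm, smul_smul, Nat.factorial_succ]

end SquareZero

theorem prod_ofFn_tmul {R A B : Type*} [CommSemiring R] [Semiring A] [Algebra R A]
    [Semiring B] [Algebra R B] {n : ℕ} (a : Fin n → A) (b : Fin n → B) :
    (List.ofFn fun i => a i ⊗ₜ[R] b i).prod = (List.ofFn a).prod ⊗ₜ[R] (List.ofFn b).prod := by
  induction n with
  | zero => simp [Algebra.TensorProduct.one_def]
  | succ n ih => simp only [List.ofFn_succ, List.prod_cons, ih, Algebra.TensorProduct.tmul_mul_tmul]

theorem alternatingMap_apply_eq_basis_det_smul {R M N ι : Type*} [CommRing R] [AddCommGroup M]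
    [Module R M] [AddCommGroup N] [Module R N] [Fintype ι] [DecidableEq ι]
    (b : Module.Basis ι R M) (f : M [⋀^ι]→ₗ[R] N) (v : ι → M) :
    f v = b.det v • f b := by
  suffices f = (LinearMap.toSpanSingleton R N (f b)).compAlternatingMap b.det from
    DFunLike.congr_fun this v
  refine b.ext_alternating fun i hi => ?_
  let σ : Equiv.Perm ι := Equiv.ofBijective i (Finite.injective_iff_bijective.1 hi)
  change f (b ∘ σ) = b.det (b ∘ σ) • f b
  simp [AlternatingMap.map_perm, Module.Basis.det_self]

section DoubleForm

open ExteriorAlgebra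

variable {R m n : Type*} [CommRing R]

theorem ι_mul_ι_swap {M : Type*} [AddCommGroup M] [Module R M] (u v : M) :
    ι R v * ι R u = -(ι R u * ι R v) :=
  eq_neg_of_add_eq_zero_left (ι_add_mul_swap v u)

theorem commute_ι_tmul_ι {M N : Type*} [AddCommGroup M] [Module R M] [AddCommGroup N] [Module R N]
    (u u' : M) (v v' : N) :
    Commute (ι R u ⊗ₜ[R] ι R v) (ι R u' ⊗ₜ[R] ι R v') := by
  rw [Commute, SemiconjBy, Algebra.TensorProduct.tmul_mul_tmul,
    Algebra.TensorProduct.tmul_mul_tmul, ι_mul_ι_swap u u', ι_mul_ι_swap v v',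
    TensorProduct.neg_tmul, TensorProduct.tmul_neg, neg_neg]

theorem ι_mul_ι_eq_sum_lt [Fintype n] [LinearOrder n] (u v : n → R) :
    ι R u * ι R v = ∑ i, ∑ j, if i < j then
      (u i * v j - u j * v i) • (ι R (Pi.single i (1 : R)) * ι R (Pi.single j 1)) else 0 := by
  have ι_expand (w : n → R) : ι R w = ∑ i, w i • ι R (Pi.single i (1 : R)) := by
    conv_lhs => rw [pi_eq_sum_univ' w, map_sum]
    simp only [map_smul]
  rw [ι_expand u, ι_expand v, Finset.sum_mul_sum, sum_sum_eq_sum_sum_lt _ (by simp)]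
  refine Finset.sum_congr rfl fun i _ => Finset.sum_congr rfl fun j _ => ?_
  rw [smul_mul_smul_comm, smul_mul_smul_comm, ι_mul_ι_swap (Pi.single i 1) (Pi.single j 1),
    sub_smul, smul_neg, ← sub_eq_add_neg, mul_comm (u j)]

variable [Fintype m] [DecidableEq m]

/-- The `(1,1)`-double form `∑ α, e_α ⊗ S_α` of a matrix `S` with rows `S_α`, as a linear function
of `S`. It turns determinants and minors into powers. -/
def doubleForm : Matrix m n R →ₗ[R] ExteriorAlgebra R (m → R) ⊗[R] ExteriorAlgebra R (n → R) where
  toFun S := ∑ α, ι R (Pi.single α 1) ⊗ₜ[R] ι R (S.row α)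
  map_add' S T := by
    simp only [← Finset.sum_add_distrib, ← TensorProduct.tmul_add, ← map_add]; rfl
  map_smul' c S := by
    simp only [Finset.smul_sum, RingHom.id_apply, ← TensorProduct.tmul_smul, ← map_smul]; rfl

theorem doubleForm_apply (S : Matrix m n R) :
    doubleForm S = ∑ α, ι R (Pi.single α 1) ⊗ₜ[R] ι R (S.row α) := rfl

theorem commute_doubleForm (S T : Matrix m n R) : Commute (doubleForm S) (doubleForm T) :=
  .sum_left _ _ _ fun _ _ => .sum_right _ _ _ fun _ _ => commute_ι_tmul_ι _ _ _ _

theorem doubleForm_sq {R m n : Type*} [CommRing R] [Fintype m] [LinearOrder m] [Fintype n]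
    [LinearOrder n] (S : Matrix m n R) :
    doubleForm S ^ 2 = (2 : R) • ∑ α, ∑ β, ∑ i, ∑ j, if α < β ∧ i < j then
      (S α i * S β j - S α j * S β i) • ((ι R (Pi.single α (1 : R)) * ι R (Pi.single β 1)) ⊗ₜ[R]
        (ι R (Pi.single i (1 : R)) * ι R (Pi.single j 1))) else 0 := by
  rw [pow_two, doubleForm_apply, Finset.sum_mul_sum, sum_sum_eq_sum_sum_lt _ (by simp)]
  simp only [Finset.smul_sum]
  refine Finset.sum_congr rfl fun α _ => Finset.sum_congr rfl fun β _ => ?_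
  by_cases hαβ : α < β
  · rw [if_pos hαβ, (commute_ι_tmul_ι (Pi.single β 1) _ (S.row β) _).eq, ← two_smul R,
      Algebra.TensorProduct.tmul_mul_tmul, ι_mul_ι_eq_sum_lt (S.row α) (S.row β)]
    simp only [hαβ, true_and, TensorProduct.tmul_sum, Finset.smul_sum]
    refine Finset.sum_congr rfl fun i _ => Finset.sum_congr rfl fun j _ => ?_
    split_ifs
    · simp [TensorProduct.tmul_smul]
    · simp
  · simp [hαβ]

theorem doubleForm_pow_card {r : ℕ} (S : Matrix (Fin r) (Fin r) R) :
    doubleForm S ^ r = ((r.factorial : R) * S.det) •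
      ((List.ofFn fun α => ι R (Pi.single α (1 : R))).prod ⊗ₜ[R]
        (List.ofFn fun i => ι R (Pi.single i (1 : R))).prod) := by
  have row_prod : (List.ofFn fun α => ι R (S.row α)).prod
      = S.det • (List.ofFn fun i => ι R (Pi.single i (1 : R))).prod := by
    have h_det : (Pi.basisFun R (Fin r)).det S.row = S.det := Pi.basisFun_det_apply S.row
    simpa only [h_det, ιMulti_apply, Pi.basisFun_apply] using
      alternatingMap_apply_eq_basis_det_smul (Pi.basisFun R (Fin r)) (ιMulti R r) S.row
  rw [doubleForm_apply, sum_pow_eq_factorial_smul_prod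
      (fun _ _ => commute_ι_tmul_ι _ _ _ _) (fun _ => by simp),
    prod_ofFn_tmul, row_prod, TensorProduct.tmul_smul, ← Nat.cast_smul_eq_nsmul R, smul_smul]

theorem hasWeakIntegral_doubleForm_sq {m n Ω : Type*} [Fintype m] [LinearOrder m] [Fintype n]
    [LinearOrder n] [MeasurableSpace Ω] {μ : Measure Ω} {S : Ω → Matrix m n ℝ}
    (hS : ∀ α i β j, Integrable (fun ω => S ω α i * S ω β j) μ) :
    HasWeakIntegral μ (fun ω => doubleForm (S ω) ^ 2)
      ((2 : ℝ) • ∑ α, ∑ β, ∑ i, ∑ j, if α < β ∧ i < j then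
        ((∫ ω, S ω α i * S ω β j ∂μ) - ∫ ω, S ω α j * S ω β i ∂μ) •
          ((ι ℝ (Pi.single α (1 : ℝ)) * ι ℝ (Pi.single β 1)) ⊗ₜ[ℝ]
            (ι ℝ (Pi.single i (1 : ℝ)) * ι ℝ (Pi.single j 1))) else 0) := by
  simp only [doubleForm_sq]
  refine .map (.sum fun α _ => .sum fun β _ => .sum fun i _ => .sum fun j _ => ?_)
    (LinearMap.lsmul ℝ _ 2)
  split_ifs
  · rw [← integral_sub (hS ..) (hS ..)]
    exact hasWeakIntegral_smul_const ((hS ..).sub (hS ..)) _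
  · simp [HasWeakIntegral]

end DoubleForm

theorem factorial_two_mul_eq_doubleFactorial_mul (h : ℕ) :
    (2 * h).factorial = (2 * h - 1).doubleFactorial * (2 ^ h * h.factorial) := by
  rw [← Nat.doubleFactorial_two_mul]
  cases h with
  | zero => simp
  | succ h =>
    rw [Nat.mul_succ, Nat.factorial_eq_mul_doubleFactorial, mul_comm]
    rfl

/- The topology is the one of the local sup norm; Mathlib's `instTopologicalSpaceMatrix` agrees with
it, but not at the transparency of instance search. -/
instance matrixBorelSpace (n m : ℕ) :
    @BorelSpace (Matrix (Fin n) (Fin m) ℝ) PseudoMetricSpace.toUniformSpace.toTopologicalSpace _ :=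
  inferInstanceAs (BorelSpace (Fin n → Fin m → ℝ))

theorem isGaussian_matrix_of_map_eq_gaussianReal {n m : ℕ} {μ : Measure (Matrix (Fin n) (Fin m) ℝ)}
    (hμ : ∀ L : Matrix (Fin n) (Fin m) ℝ →L[ℝ] ℝ, ∃ a v, μ.map L = gaussianReal a v) :
    @IsGaussian _ PseudoMetricSpace.toUniformSpace.toTopologicalSpace _ _ _ μ :=
  isGaussian_of_map_eq_gaussianReal (E := Fin n → Fin m → ℝ) hμ

end stochasticGBC

/-- Expected determinant of a centered Gaussian random `r × r` matrix
(`r = 2h`): with second moments `K(α,i,β,j) = E (S α i * S β j)` and the `(2,2)`-double form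
`Ξ = ∑_{α<β, i<j} (K(α,i,β,j) − K(α,j,β,i)) • ((e α * e β) ⊗ (e i * e j))`, one has
`(h! ⬝ E (det S)) • (etop ⊗ etop) = Ξ ^ h`. -/
theorem stochasticGBC.expected_det_eq_pfaffian_of_covariance
    (h : ℕ) (hh : 0 < h) (r : ℕ) (hr : r = 2 * h)
    (μ : Measure (Matrix (Fin r) (Fin r) ℝ)) [IsProbabilityMeasure μ]
    (hgauss : ∀ L : Matrix (Fin r) (Fin r) ℝ →L[ℝ] ℝ,
      ∃ (a : ℝ) (v : NNReal), μ.map L = gaussianReal a v)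
    (hcentered : (∫ S, S ∂μ) = 0) :
    let K : Fin r → Fin r → Fin r → Fin r → ℝ :=
      fun α i β j => ∫ S, S α i * S β j ∂μ
    let e : Fin r → ExteriorAlgebra ℝ (Fin r → ℝ) :=
      fun α => ExteriorAlgebra.ι ℝ (Pi.single α 1)
    let etop : ExteriorAlgebra ℝ (Fin r → ℝ) := ((List.finRange r).map e).prod
    let Ξ : ExteriorAlgebra ℝ (Fin r → ℝ) ⊗[ℝ] ExteriorAlgebra ℝ (Fin r → ℝ) :=
      ∑ α : Fin r, ∑ β : Fin r, ∑ i : Fin r, ∑ j : Fin r,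
        if α < β ∧ i < j then
          (K α i β j - K α j β i) • ((e α * e β) ⊗ₜ[ℝ] (e i * e j))
        else 0
    ((h.factorial : ℝ) * ∫ S, Matrix.det S ∂μ) • (etop ⊗ₜ[ℝ] etop) = Ξ ^ h := by
  subst hr
  intro K e etop Ξ
  have := isGaussian_matrix_of_map_eq_gaussianReal hgauss
  have integrable_mul (α i β j) : Integrable (fun S => S α i * S β j) μ := by
    simpa using integrable_prod_linearMap (μ := μ)
      ![Matrix.entryLinearMap ℝ ℝ α i, Matrix.entryLinearMap ℝ ℝ β j]
  have integral_sq : HasWeakIntegral μ (fun S => doubleForm S ^ 2) ((2 : ℝ) • Ξ) :=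
    hasWeakIntegral_doubleForm_sq integrable_mul
  have integral_pow := hasWeakIntegral_even_pow hcentered commute_doubleForm integral_sq h
  have etop_eq : etop = (List.ofFn e).prod := by rw [List.ofFn_eq_map]
  have compare : ((2 * h - 1).doubleFactorial * 2 ^ h : ℝ) • Ξ ^ h
      = ((2 * h).factorial * ∫ S, S.det ∂μ) • (etop ⊗ₜ[ℝ] etop) := by
    simp only [doubleForm_pow_card, smul_pow, smul_smul] at integral_pow
    rw [etop_eq, ← integral_const_mul]
    exact integral_pow.eq_integral_smul
  have coeff_ne_zero : ((2 * h - 1).doubleFactorial * 2 ^ h : ℝ) ≠ 0 := by positivity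
  refine smul_right_injective _ coeff_ne_zero (Eq.trans ?_ compare.symm)
  simp only [factorial_two_mul_eq_doubleFactorial_mul, Nat.cast_mul, Nat.cast_pow, Nat.cast_ofNat,
    smul_smul, mul_assoc]
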